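/- arXiv:1603.06493 — 5 statements merged into one kernel-verified Lean document; each statement's English description precedes it below -/
import Mathlib

section
/- In the sequence setup described in the context, for every a > 0 there exists a constant C_a > 0 such that for all sufficiently large n, |{x ∈ Ω : g_n(x) > a}| ≤ C_a |{x ∈ Ω : v_n(x) ≤ ε_n}|. -/
/-!
The hypothesis says `∫ w ≤ ε² ∫ g` with `w = Σ uᵢ |fᵢ|^p`, and `w = v g` where `g ≠ 0`. Off the set
`S = {v ≤ ε}` one has `g ≤ w / ε`, so the part of `∫ g` off `S` is at most `ε ∫ g`; for `ε ≤ 1/2`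
it is absorbed. If `g` is bounded by a constant `C` on `S`, this gives `∫ g ≤ 2 C |S|`, and
Markov's inequality concludes with `C_a = 2 C / a`.

The bound on `S` is a pointwise fact (`exists_bound_of_weighted_le`), resting on coercivity:
positivity of the principal minors forces `uᵢ (A u)ᵢ > 0` for some `i` when `u ≠ 0`
(`exists_pos_mul_mulVec`), and compactness of the admissible matrices turns this into
`uᵢ (A u)ᵢ ≥ c ‖u‖²` with `c` depending only on `N` and `κ` (`exists_uniform_coercive`). If `‖u‖`
is large, both `uᵢ` and `|fᵢ|` are then of order `‖u‖`, so `w` is of order `‖u‖^(p+1)` while `g` is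
at most of order `‖u‖^p`, contradicting `w ≤ g`.
-/

open MeasureTheory Filter

/-- Principal minor of `A` over the index set `I`. -/
noncomputable def minorP {N : ℕ} (A : Matrix (Fin N) (Fin N) ℝ) (I : Finset (Fin N)) : ℝ :=
  Matrix.det (Matrix.of fun i j : {x : Fin N // x ∈ I} => A i.1 j.1)

/-- The determinant `Δ_{I,j}` obtained by bordering the principal minor over `I`
with the column `m` and the row `j`. -/
noncomputable def minorM {N : ℕ} (A : Matrix (Fin N) (Fin N) ℝ) (m : Fin N → ℝ)
    (I : Finset (Fin N)) (j : Fin N) : ℝ :=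
  Matrix.det (Matrix.of fun k l : Option {x : Fin N // x ∈ I} =>
    match k, l with
    | some k', some l' => A k'.1 l'.1
    | some k', none => m k'.1
    | none, some l' => A j l'.1
    | none, none => m j)

/-- An admissible pair of coefficients with constant `κ`:
entries of `A` and `m` bounded by `1/κ`, all principal minors `Δ_I ≥ κ`,
and all bordered determinants `Δ_{I,j} ≥ κ` for `j ∉ I`. -/
def IsAdmissible {N : ℕ} (κ : ℝ) (A : Matrix (Fin N) (Fin N) ℝ) (m : Fin N → ℝ) : Prop :=
  (∀ i j, |A i j| ≤ 1 / κ) ∧ (∀ i, m i ≤ 1 / κ) ∧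
    (∀ I : Finset (Fin N), κ ≤ minorP A I) ∧
    (∀ I : Finset (Fin N), ∀ j ∉ I, κ ≤ minorM A m I j)

/-- `f_i(u) = m_i − Σ_j a_{ij} u_j`. -/
def fComp {N : ℕ} (A : Matrix (Fin N) (Fin N) ℝ) (m : Fin N → ℝ) (u : Fin N → ℝ)
    (i : Fin N) : ℝ :=
  m i - ∑ j, A i j * u j

/-- Pointwise `f_{i}(x) = m_i(x) − Σ_j a_{ij}(x) u_j(x)` for coefficient fields on `ℝ^d`. -/
noncomputable def fSeq {d N : ℕ} (A : (Fin d → ℝ) → Matrix (Fin N) (Fin N) ℝ)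
    (m : (Fin d → ℝ) → Fin N → ℝ) (u : (Fin d → ℝ) → Fin N → ℝ)
    (x : Fin d → ℝ) (i : Fin N) : ℝ :=
  m x i - ∑ j, A x i j * u x j

/-- Pointwise `g(x) = Σ_i |f_i(x)|^p`. -/
noncomputable def gSeq {d N : ℕ} (A : (Fin d → ℝ) → Matrix (Fin N) (Fin N) ℝ)
    (m : (Fin d → ℝ) → Fin N → ℝ) (u : (Fin d → ℝ) → Fin N → ℝ)
    (p : ℝ) (x : Fin d → ℝ) : ℝ :=
  ∑ i, |fSeq A m u x i| ^ p

/-- Pointwise `v(x) = g(x)⁻¹ Σ_i u_i(x) |f_i(x)|^p` when `g(x) ≠ 0`, and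
`v(x) = min_i u_i(x)` when `g(x) = 0`. -/
noncomputable def vSeq {d N : ℕ} (A : (Fin d → ℝ) → Matrix (Fin N) (Fin N) ℝ)
    (m : (Fin d → ℝ) → Fin N → ℝ) (u : (Fin d → ℝ) → Fin N → ℝ)
    (p : ℝ) (x : Fin d → ℝ) : ℝ :=
  if gSeq A m u p x = 0 then ⨅ i, u x i
  else (∑ i, u x i * |fSeq A m u x i| ^ p) / gSeq A m u p x

/-- The rows of `A` indexed by `S`, completed by rows of the identity, have determinant
`minorP A S`; this expresses principal minors as determinants of one fixed size. -/
lemma det_piecewise_rows {N : ℕ} (A : Matrix (Fin N) (Fin N) ℝ) (S : Finset (Fin N)) :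
    Matrix.det (Matrix.of (S.piecewise (fun i => A i) (fun i => (1 : Matrix (Fin N) (Fin N) ℝ) i)))
      = minorP A S := by
  rw [Matrix.twoBlockTriangular_det _ (fun i => i ∈ S)]
  · have h1 : Matrix.toSquareBlockProp
        (Matrix.of (S.piecewise (fun i => A i) (fun i => (1 : Matrix (Fin N) (Fin N) ℝ) i)))
        (fun i => ¬ i ∈ S) = 1 := by
      ext i j
      simp [Matrix.toSquareBlockProp, Finset.piecewise, i.2, Matrix.one_apply, Subtype.ext_iff]
    have h2 : Matrix.toSquareBlockProp
        (Matrix.of (S.piecewise (fun i => A i) (fun i => (1 : Matrix (Fin N) (Fin N) ℝ) i)))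
        (fun i => i ∈ S) = Matrix.of fun i j : {x : Fin N // x ∈ S} => A i.1 j.1 := by
      ext i j
      simp [Matrix.toSquareBlockProp, Finset.piecewise, i.2]
    rw [h1, h2, Matrix.det_one, mul_one, minorP]
    -- The two determinants carry different `Fintype` instances on the subtype.
    congr!
  · intro i hi j hj
    have hij : i ≠ j := fun h => hi (h ▸ hj)
    simp [Finset.piecewise, hi, Matrix.one_apply, hij]

/-- Multilinear expansion of `det (diag s * A + diag t)` over the principal minors of `A`. -/
lemma det_diag_combination {N : ℕ} (A : Matrix (Fin N) (Fin N) ℝ) (s t : Fin N → ℝ) :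
    Matrix.det (Matrix.of fun i => s i • A i + t i • (1 : Matrix (Fin N) (Fin N) ℝ) i)
      = ∑ S : Finset (Fin N), (∏ i, S.piecewise s t i) * minorP A S := by
  have h := (Matrix.detRowAlternating (n := Fin N) (R := ℝ)).toMultilinearMap.map_add_univ
    (fun i => s i • A i) (fun i => t i • (1 : Matrix (Fin N) (Fin N) ℝ) i)
  refine Eq.trans h (Finset.sum_congr rfl fun S _ => ?_)
  rw [← det_piecewise_rows]
  have h2 := (Matrix.detRowAlternating (n := Fin N) (R := ℝ)).toMultilinearMap.map_smul_univ
    (S.piecewise s t) (S.piecewise (fun i => A i) (fun i => (1 : Matrix (Fin N) (Fin N) ℝ) i))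
  refine Eq.trans (congrArg _ ?_) h2
  funext i
  by_cases hi : i ∈ S <;> simp [Finset.piecewise, hi]

/-- A matrix with positive principal minors reverses the sign of no nonzero vector. -/
lemma exists_pos_mul_mulVec {N : ℕ} (A : Matrix (Fin N) (Fin N) ℝ)
    (hA : ∀ I, 0 < minorP A I) (u : Fin N → ℝ) (hu : u ≠ 0) :
    ∃ i, 0 < u i * ∑ j, A i j * u j := by
  classical
  by_contra! hneg
  -- Nonnegative weights for which `diag s * A + diag t` annihilates `u`.
  set s : Fin N → ℝ := fun i => u i ^ 2 with hs
  set t : Fin N → ℝ := fun i => if u i = 0 then 1 else -(u i * ∑ j, A i j * u j) with ht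
  have hs0 : ∀ i, 0 ≤ s i := fun i => sq_nonneg _
  have ht0 : ∀ i, 0 ≤ t i := by
    intro i
    simp only [ht]
    split_ifs
    · exact zero_le_one
    · linarith [hneg i]
  have hdet : Matrix.det
      (Matrix.of fun i => s i • A i + t i • (1 : Matrix (Fin N) (Fin N) ℝ) i) = 0 := by
    rw [← Matrix.exists_mulVec_eq_zero_iff]
    refine ⟨u, hu, ?_⟩
    funext i
    have hrow : (Matrix.of fun i => s i • A i + t i • (1 : Matrix (Fin N) (Fin N) ℝ) i).mulVec u i
        = s i * ∑ j, A i j * u j + t i * u i := by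
      simp [Matrix.mulVec, dotProduct, add_mul, Finset.sum_add_distrib, Finset.mul_sum,
        Matrix.one_apply, mul_assoc]
    rw [hrow]
    by_cases h : u i = 0
    · simp [hs, h]
    · simp only [hs, ht, h, if_false, Pi.zero_apply]
      ring
  rw [det_diag_combination] at hdet
  have hpw : ∀ S : Finset (Fin N), 0 ≤ (∏ i, S.piecewise s t i) * minorP A S := fun S =>
    mul_nonneg (Finset.prod_nonneg fun i _ => by
      by_cases hi : i ∈ S <;> simp [Finset.piecewise, hi, hs0, ht0]) (hA S).le
  -- The summand of the support of `u` is positive.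
  have hpos : 0 < (∏ i, (Finset.univ.filter fun i => u i ≠ 0).piecewise s t i) *
      minorP A (Finset.univ.filter fun i => u i ≠ 0) := by
    refine mul_pos (Finset.prod_pos fun i _ => ?_) (hA _)
    by_cases h : u i = 0
    · simp [Finset.piecewise, h, ht]
    · simp only [Finset.piecewise, Finset.mem_filter, Finset.mem_univ, true_and, ne_eq, h,
        not_false_eq_true, if_true, hs]
      positivity
  have := (Finset.sum_eq_zero_iff_of_nonneg fun S _ => hpw S).1 hdet
    (Finset.univ.filter fun i => u i ≠ 0) (Finset.mem_univ _)
  linarith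

/-- The constant is uniform in `A` because the matrices with entries bounded by `1 / κ` and
principal minors at least `κ` form a compact set. -/
lemma exists_uniform_coercive {N : ℕ} (hN : 0 < N) (κ : ℝ) (hκ : 0 < κ) :
    ∃ c : ℝ, 0 < c ∧ ∀ A : Matrix (Fin N) (Fin N) ℝ, (∀ i j, |A i j| ≤ 1 / κ) →
      (∀ I, κ ≤ minorP A I) → ∀ u : Fin N → ℝ, ∃ i, c * ‖u‖ ^ 2 ≤ u i * ∑ j, A i j * u j := by
  have : Nonempty (Fin N) := ⟨⟨0, hN⟩⟩
  let F : (Fin N → Fin N → ℝ) × (Fin N → ℝ) → ℝ :=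
    fun q => ∑ i, max 0 (q.2 i * ∑ j, q.1 i j * q.2 j)
  let K : Set ((Fin N → Fin N → ℝ) × (Fin N → ℝ)) :=
    (Set.univ.pi fun _ => Set.univ.pi fun _ => Set.Icc (-(1 / κ)) (1 / κ)) ×ˢ Metric.sphere 0 1 ∩
      {q | ∀ I, κ ≤ minorP (Matrix.of q.1) I}
  have hK : IsCompact K := by
    refine IsCompact.inter_right ((isCompact_univ_pi fun _ => isCompact_univ_pi fun _ =>
      isCompact_Icc).prod (isCompact_sphere _ _)) ?_
    simp only [Set.ofPred_forall]
    refine isClosed_iInter fun I => isClosed_le continuous_const ?_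
    unfold minorP
    refine Continuous.matrix_det ?_
    refine continuous_matrix fun i j => ?_
    simp only [Matrix.of_apply]
    fun_prop
  have hF : Continuous F := by fun_prop
  have hFpos : ∀ q ∈ K, 0 < F q := by
    rintro ⟨B, u⟩ ⟨⟨_, hu⟩, hB⟩
    have hu1 : u ≠ 0 := by
      rintro rfl
      simp at hu
    obtain ⟨i, hi⟩ := exists_pos_mul_mulVec (Matrix.of B) (fun I => hκ.trans_le (hB I)) u hu1
    exact Finset.sum_pos' (fun _ _ => le_max_left _ _)
      ⟨i, Finset.mem_univ _, hi.trans_le (le_max_right _ _)⟩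
  obtain ⟨c, hc, hcF⟩ := hK.exists_forall_le' hF.continuousOn hFpos
  have hNR : (0 : ℝ) < N := by exact_mod_cast hN
  refine ⟨c / N, div_pos hc hNR, fun A hA1 hA2 u => ?_⟩
  by_cases hu : u = 0
  · exact ⟨⟨0, hN⟩, by simp [hu]⟩
  have hun : 0 < ‖u‖ := norm_pos_iff.2 hu
  have hmem : ((fun i j => A i j, ‖u‖⁻¹ • u) : (Fin N → Fin N → ℝ) × (Fin N → ℝ)) ∈ K := by
    refine ⟨⟨?_, ?_⟩, hA2⟩
    · intro i _ j _
      exact abs_le.1 (hA1 i j)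
    · simp [norm_smul, hun.ne']
  have hle := hcF _ hmem
  obtain ⟨i, -, hi⟩ := Finset.exists_le_of_sum_le (s := Finset.univ)
    (f := fun _ : Fin N => c / N)
    (g := fun i => max 0 ((‖u‖⁻¹ • u) i * ∑ j, A i j * (‖u‖⁻¹ • u) j)) Finset.univ_nonempty (by
      simpa [F, mul_div_cancel₀ _ hNR.ne', hNR.ne'] using hle)
  have hi2 : c / N ≤ (‖u‖⁻¹ • u) i * ∑ j, A i j * (‖u‖⁻¹ • u) j :=
    (le_max_iff.1 hi).resolve_left (not_le.2 (div_pos hc hNR))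
  refine ⟨i, ?_⟩
  have heq : (‖u‖⁻¹ • u) i * ∑ j, A i j * (‖u‖⁻¹ • u) j
      = (u i * ∑ j, A i j * u j) / ‖u‖ ^ 2 := by
    have : ∑ j, A i j * (‖u‖⁻¹ • u) j = ‖u‖⁻¹ * ∑ j, A i j * u j := by
      rw [Finset.mul_sum]
      exact Finset.sum_congr rfl fun j _ => by simp only [Pi.smul_apply, smul_eq_mul]; ring
    rw [this]
    simp only [Pi.smul_apply, smul_eq_mul]
    field_simp
  rw [heq, le_div_iff₀ (by positivity)] at hi2
  exact hi2

/-- Where the weighted mean of the `u i` with weights `|f i| ^ p` is at most `1`, the sum of the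
weights is bounded: for large `‖u‖` coercivity yields an index at which both `u i` and `|f i|`
are comparable to `‖u‖`, and this index alone would make the weighted mean large. -/
lemma exists_bound_of_weighted_le {N : ℕ} (hN : 0 < N) (p κ : ℝ) (hp : 1 ≤ p) (hκ : 0 < κ) :
    ∃ C : ℝ, 0 < C ∧ ∀ (A : Matrix (Fin N) (Fin N) ℝ) (m u : Fin N → ℝ),
      IsAdmissible κ A m → (∀ i, 0 ≤ u i) →
      ∑ i, u i * |fComp A m u i| ^ p ≤ ∑ i, |fComp A m u i| ^ p →
      ∑ i, |fComp A m u i| ^ p ≤ C := by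
  obtain ⟨c, hc, hcoer⟩ := exists_uniform_coercive hN κ hκ
  have hNR : (0 : ℝ) < N := by exact_mod_cast hN
  have hp0 : 0 ≤ p := by linarith
  set L : ℝ := (N + 1) / κ with hL
  have hLpos : 0 < L := by positivity
  set M₁ : ℝ := N * L ^ p / ((c * κ / N) * (c / 2) ^ p) with hM₁
  set R : ℝ := max 1 (max (2 / (κ * c)) M₁) with hR
  have hR1 : 1 ≤ R := le_max_left _ _
  have hRpos : 0 < R := by linarith
  refine ⟨N * (L * R) ^ p, by positivity, fun A m u hadm hu hw => ?_⟩
  obtain ⟨hA, hm, hP, hM⟩ := hadm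
  have hm0 : ∀ j, κ ≤ m j := by
    intro j
    have h := hM ∅ j (by simp)
    rwa [minorM, Matrix.det_unique] at h
  have hAu : ∀ i, |∑ j, A i j * u j| ≤ N / κ * ‖u‖ := by
    intro i
    calc |∑ j, A i j * u j| ≤ ∑ j, |A i j * u j| := Finset.abs_sum_le_sum_abs _ _
      _ ≤ ∑ _j : Fin N, 1 / κ * ‖u‖ := Finset.sum_le_sum fun j _ => by
          rw [abs_mul]
          exact mul_le_mul (hA i j) (norm_le_pi_norm u j) (abs_nonneg _) (by positivity)
      _ = N / κ * ‖u‖ := by simp; ring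
  have hf : ∀ B, 1 ≤ B → ‖u‖ ≤ B → ∀ i, |fComp A m u i| ≤ L * B := by
    intro B hB huB i
    have h1 : |fComp A m u i| ≤ |m i| + |∑ j, A i j * u j| := abs_sub _ _
    have h2 : |m i| ≤ 1 / κ * B := by
      rw [abs_of_pos (hκ.trans_le (hm0 i))]
      exact (hm i).trans (le_mul_of_one_le_right (by positivity) hB)
    have h3 : N / κ * ‖u‖ ≤ N / κ * B := by gcongr
    have h4 : L * B = 1 / κ * B + N / κ * B := by rw [hL]; ring
    linarith [hAu i]
  have hg : ∀ B, 1 ≤ B → ‖u‖ ≤ B → ∑ i, |fComp A m u i| ^ p ≤ N * (L * B) ^ p := by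
    intro B hB huB
    calc ∑ i, |fComp A m u i| ^ p ≤ ∑ _i : Fin N, (L * B) ^ p :=
          Finset.sum_le_sum fun i _ => Real.rpow_le_rpow (abs_nonneg _) (hf B hB huB i) hp0
      _ = N * (L * B) ^ p := by simp
  refine hg R hR1 ?_
  by_contra! hlt
  set B := ‖u‖ with hBdef
  have hB1 : 1 ≤ B := hR1.trans hlt.le
  have hB0 : 0 < B := by linarith
  have hB2 : 2 / (κ * c) < B := lt_of_le_of_lt ((le_max_left _ _).trans (le_max_right _ _)) hlt
  have hB3 : M₁ < B := lt_of_le_of_lt ((le_max_right _ _).trans (le_max_right _ _)) hlt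
  obtain ⟨i, hi⟩ := hcoer A hA hP u
  set y := ∑ j, A i j * u j with hy
  have huiB : u i ≤ B := (le_abs_self _).trans (norm_le_pi_norm u i)
  have hcB : 0 < c * B ^ 2 := by positivity
  have hypos : 0 < y := pos_of_mul_pos_right (hcB.trans_le hi) (hu i)
  have hylow : c * B ≤ y := by
    have : B * (c * B) ≤ B * y := by nlinarith
    exact le_of_mul_le_mul_left this hB0
  have hyup : y ≤ N / κ * B := (le_abs_self _).trans (hAu i)
  have huilow : c * κ / N * B ≤ u i := by
    have h1 : c * B ^ 2 ≤ u i * (N / κ * B) := hi.trans (by gcongr; exact hu i)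
    have h2 : (c * κ / N * B) * (N / κ * B) = c * B ^ 2 := by field_simp
    rw [← h2] at h1
    exact le_of_mul_le_mul_right h1 (by positivity)
  have hfi : c / 2 * B ≤ |fComp A m u i| := by
    have h1 : 1 / κ ≤ c / 2 * B := by
      rw [div_lt_iff₀ (by positivity)] at hB2
      rw [div_le_iff₀ hκ]
      nlinarith
    have h2 : y - m i ≤ |fComp A m u i| := by
      rw [fComp, abs_sub_comm]
      exact le_abs_self _
    linarith [hm i]
  have hwi : (c * κ / N * B) * (c / 2 * B) ^ p ≤ ∑ i, u i * |fComp A m u i| ^ p := by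
    refine le_trans ?_ (Finset.single_le_sum (f := fun i => u i * |fComp A m u i| ^ p)
      (fun j _ => mul_nonneg (hu j) (by positivity)) (Finset.mem_univ i))
    exact mul_le_mul huilow (Real.rpow_le_rpow (by positivity) hfi hp0) (by positivity) (hu i)
  have hfin := (hwi.trans hw).trans (hg B hB1 le_rfl)
  rw [Real.mul_rpow (by positivity) hB0.le, Real.mul_rpow hLpos.le hB0.le] at hfin
  have hBp : 0 < B ^ p := by positivity
  have : B * ((c * κ / N) * (c / 2) ^ p) ≤ N * L ^ p := by
    refine le_of_mul_le_mul_right (le_of_eq_of_le ?_ (hfin.trans_eq ?_)) hBp <;> ring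
  rw [← le_div_iff₀ (by positivity)] at this
  exact absurd this (not_le.2 hB3)

/-- In the sequence setup, for every `a > 0` there is `C_a > 0` such that for all
sufficiently large `n`, `|{g_n > a}| ≤ C_a |{v_n ≤ ε_n}|`. -/
theorem measure_gn_gt_a_le_const_mul_measure_vn_le_eps {d N : ℕ} (hN : 0 < N)
    (p κ : ℝ) (hp : 1 ≤ p) (hκ : 0 < κ)
    (Ω : Set (Fin d → ℝ)) (hΩo : IsOpen Ω) (hΩb : Bornology.IsBounded Ω)
    (A : ℕ → (Fin d → ℝ) → Matrix (Fin N) (Fin N) ℝ)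
    (m : ℕ → (Fin d → ℝ) → Fin N → ℝ)
    (u : ℕ → (Fin d → ℝ) → Fin N → ℝ)
    (hAmeas : ∀ n i j, Measurable fun x => A n x i j)
    (hmmeas : ∀ n i, Measurable fun x => m n x i)
    (humeas : ∀ n i, Measurable fun x => u n x i)
    (hadm : ∀ n, ∀ x ∈ Ω, IsAdmissible κ (A n x) (m n x))
    (hu0 : ∀ n, ∀ x ∈ Ω, ∀ i, 0 ≤ u n x i)
    (eps : ℕ → ℝ) (heps : ∀ n, eps n ∈ Set.Ioo (0 : ℝ) 1)
    (hepslim : Tendsto eps atTop (nhds 0))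
    (hgint : ∀ n, ∫⁻ x in Ω, ENNReal.ofReal (gSeq (A n) (m n) (u n) p x) < ⊤)
    (hmain : ∀ n,
      ∫⁻ x in Ω, ENNReal.ofReal (∑ i, u n x i * |fSeq (A n) (m n) (u n) x i| ^ p) ≤
        ENNReal.ofReal (eps n ^ 2) *
          ∫⁻ x in Ω, ENNReal.ofReal (gSeq (A n) (m n) (u n) p x)) :
    ∀ a : ℝ, 0 < a → ∃ C : ℝ, 0 < C ∧ ∀ᶠ n in atTop,
      volume {x ∈ Ω | a < gSeq (A n) (m n) (u n) p x} ≤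
        ENNReal.ofReal C * volume {x ∈ Ω | vSeq (A n) (m n) (u n) p x ≤ eps n} := by
  intro a ha
  obtain ⟨C, hC, hbound⟩ := exists_bound_of_weighted_le hN p κ hp hκ
  refine ⟨2 * C / a, by positivity, ?_⟩
  have hsmall : ∀ᶠ n in atTop, eps n ≤ 1 / 2 :=
    (hepslim.eventually (gt_mem_nhds (by norm_num : (0 : ℝ) < 1 / 2))).mono fun _ h => h.le
  filter_upwards [hsmall] with n hn
  have he0 : 0 < eps n := (heps n).1
  have he1 : eps n < 1 := (heps n).2
  have hfmeas : ∀ i, Measurable fun x => |fSeq (A n) (m n) (u n) x i| ^ p := by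
    intro i
    have h1 : Measurable fun x => fSeq (A n) (m n) (u n) x i :=
      (hmmeas n i).sub (Finset.measurable_sum _ fun j _ => (hAmeas n i j).mul (humeas n j))
    exact (continuous_abs.measurable.comp h1).pow_const p
  have hgmeas : Measurable fun x => gSeq (A n) (m n) (u n) p x :=
    Finset.measurable_sum _ fun i _ => hfmeas i
  have hwmeas : Measurable fun x => ∑ i, u n x i * |fSeq (A n) (m n) (u n) x i| ^ p :=
    Finset.measurable_sum _ fun i _ => (humeas n i).mul (hfmeas i)
  set g : (Fin d → ℝ) → ℝ := fun x => gSeq (A n) (m n) (u n) p x with hgdef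
  set w : (Fin d → ℝ) → ℝ := fun x => ∑ i, u n x i * |fSeq (A n) (m n) (u n) x i| ^ p with hwdef
  set S : Set (Fin d → ℝ) := {x ∈ Ω | vSeq (A n) (m n) (u n) p x ≤ eps n} with hSdef
  set G : ENNReal := ∫⁻ x in Ω, ENNReal.ofReal (g x) with hGdef
  have hg0 : ∀ x, 0 ≤ g x := fun x => Finset.sum_nonneg fun i _ => by positivity
  have hw0 : ∀ x ∈ Ω, 0 ≤ w x := fun x hx =>
    Finset.sum_nonneg fun i _ => mul_nonneg (hu0 n x hx i) (by positivity)
  -- Off `S` one has `ε g ≤ w`; on `S` the function `g` is bounded by `C`.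
  have hpt : ∀ x ∈ Ω, ENNReal.ofReal (g x) ≤ S.indicator (fun _ => ENNReal.ofReal C) x +
      ENNReal.ofReal (eps n)⁻¹ * ENNReal.ofReal (w x) := by
    intro x hx
    by_cases hv : vSeq (A n) (m n) (u n) p x ≤ eps n
    · have hxS : x ∈ S := ⟨hx, hv⟩
      rw [Set.indicator_of_mem hxS]
      refine le_add_right (ENNReal.ofReal_le_ofReal ?_)
      by_cases h0 : g x = 0
      · rw [h0]; exact hC.le
      · refine hbound (A n x) (m n x) (u n x) (hadm n x hx) (hu0 n x hx) ?_
        have hgp : 0 < g x := lt_of_le_of_ne (hg0 x) (Ne.symm h0)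
        have hv2 : w x / g x ≤ eps n := by
          have := hv
          rw [vSeq, if_neg h0] at this
          exact this
        rw [div_le_iff₀ hgp] at hv2
        have : w x ≤ g x := by nlinarith
        exact this
    · refine le_add_left ?_
      rw [← ENNReal.ofReal_mul (by positivity)]
      refine ENNReal.ofReal_le_ofReal ?_
      by_cases h0 : g x = 0
      · rw [h0]; exact mul_nonneg (by positivity) (hw0 x hx)
      · have hgp : 0 < g x := lt_of_le_of_ne (hg0 x) (Ne.symm h0)
        have hv2 : eps n < w x / g x := by
          have := not_le.1 hv
          rw [vSeq, if_neg h0] at this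
          exact this
        rw [lt_div_iff₀ hgp] at hv2
        rw [inv_mul_eq_div, le_div_iff₀ he0]
        linarith
  have hGle : G ≤ ENNReal.ofReal C * volume S + ENNReal.ofReal (1 / 2) * G := by
    calc G ≤ ∫⁻ x in Ω, (S.indicator (fun _ => ENNReal.ofReal C) x +
          ENNReal.ofReal (eps n)⁻¹ * ENNReal.ofReal (w x)) :=
          setLIntegral_mono' hΩo.measurableSet hpt
      _ = (∫⁻ x in Ω, S.indicator (fun _ => ENNReal.ofReal C) x) +
          ENNReal.ofReal (eps n)⁻¹ * ∫⁻ x in Ω, ENNReal.ofReal (w x) := by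
          rw [lintegral_add_right _ (hwmeas.ennreal_ofReal.const_mul _),
            lintegral_const_mul _ hwmeas.ennreal_ofReal]
      _ ≤ ENNReal.ofReal C * volume S +
          ENNReal.ofReal (eps n)⁻¹ * (ENNReal.ofReal (eps n ^ 2) * G) := by
          gcongr
          · exact (lintegral_indicator_const_le _ _).trans
              (by gcongr; exact Measure.restrict_le_self)
          · exact hmain n
      _ ≤ ENNReal.ofReal C * volume S + ENNReal.ofReal (1 / 2) * G := by
          rw [← mul_assoc, ← ENNReal.ofReal_mul (by positivity)]
          gcongr
          calc (eps n)⁻¹ * eps n ^ 2 = eps n := by field_simp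
            _ ≤ 1 / 2 := hn
  have hGfin : G ≠ ⊤ := (hgint n).ne
  have hSfin : volume S ≠ ⊤ :=
    ((measure_mono fun x hx => hx.1).trans_lt hΩb.measure_lt_top).ne
  have hG2 : G ≤ ENNReal.ofReal (2 * C) * volume S := by
    have hr := ENNReal.toReal_mono (by finiteness) hGle
    rw [ENNReal.toReal_add (by finiteness) (by finiteness), ENNReal.toReal_mul,
      ENNReal.toReal_mul, ENNReal.toReal_ofReal hC.le,
      ENNReal.toReal_ofReal (by norm_num)] at hr
    rw [← ENNReal.toReal_le_toReal hGfin (by finiteness), ENNReal.toReal_mul,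
      ENNReal.toReal_ofReal (by positivity)]
    linarith
  have hset : MeasurableSet {x | ENNReal.ofReal a ≤ ENNReal.ofReal (g x)} :=
    measurableSet_le measurable_const hgmeas.ennreal_ofReal
  have hmarkov : ENNReal.ofReal a * volume {x ∈ Ω | a < g x} ≤ G := by
    refine le_trans ?_ (mul_meas_ge_le_lintegral hgmeas.ennreal_ofReal (ENNReal.ofReal a))
    rw [Measure.restrict_apply hset]
    gcongr
    exact fun x hx => ⟨ENNReal.ofReal_le_ofReal hx.2.le, hx.1⟩
  have hfinal := hmarkov.trans hG2
  calc volume {x ∈ Ω | a < g x}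
      = ENNReal.ofReal a⁻¹ * (ENNReal.ofReal a * volume {x ∈ Ω | a < g x}) := by
        rw [← mul_assoc, ← ENNReal.ofReal_mul (by positivity), inv_mul_cancel₀ ha.ne',
          ENNReal.ofReal_one, one_mul]
    _ ≤ ENNReal.ofReal a⁻¹ * (ENNReal.ofReal (2 * C) * volume S) := by gcongr
    _ = ENNReal.ofReal (2 * C / a) * volume S := by
        rw [← mul_assoc, ← ENNReal.ofReal_mul (by positivity), inv_mul_eq_div]
end

section
/- There exists σ > 0, depending only on N, p and κ, such that in the sequence setup described in the context, defining for each index set I ⊆ {1,…,N} the sets A_n(I) = (⋂_{i ∈ I} {x ∈ Ω : f_{in}(x) > σ}) ∩ (⋂_{j ∉ I} {x ∈ Ω : |f_{jn}(x)| < σ/2}), one has Σ_{I ⊆ {1,…,N}} |A_n(I)| → |Ω| as n → ∞. -/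
/-!
Write `h = ∑ i, u i * |f i| ^ p` and `g = ∑ i, |f i| ^ p`. The proof rests on two pointwise facts,
uniform over all admissible pairs `(A, m)` and all `u ≥ 0`.

* `exists_g_le`: `g ≤ C + h`. For large `u` one even has `g ≤ h` (`exists_g_le_h`): after rescaling
  `u` to the unit sphere, a failure for arbitrarily large `u` would yield an admissible `A` and a
  unit vector `w ≥ 0` with `w i * (A w) i = 0` for all `i`, so that the principal submatrix of `A`
  on the support of `w` has `w` in its kernel, although its determinant is at least `κ`.
* `exists_h_ge`: for suitable `σ`, a point lying in none of the sets `A(I)` satisfies `h ≥ c > 0`.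
  Indeed, if `h = 0`, then `f` vanishes on the support `J` of `u`, and a Schur complement gives
  `Δ_{J,j} = Δ_J * f j` for `j ∉ J` (`minorM_eq`); hence `f j ≥ κ / Δ_J > σ` off `J` and the point
  lies in `A(Jᶜ)`. Compactness of the set of admissible data turns `h > 0` into `h ≥ c`.

Integrating the first fact, `∫ g ≤ C |Ω| + ε² ∫ g`, so `∫ g ≤ 2 C |Ω|` once `ε² ≤ 1/2`. Integrating
the second, the set `B` of points in no `A(I)` satisfies `c |B| ≤ ∫ h ≤ ε² ∫ g → 0`. The sets `A(I)`
are disjoint, so their measures add up to `|Ω| - |B|`.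
-/

open MeasureTheory Filter

/-! ### Linear algebra -/

/-- If `w` is supported in `J` and `A w` vanishes on `J`, then `w = 0`, because the principal
submatrix of `A` on `J` is invertible. -/
lemma eq_zero_of_minorP_ne_zero {N : ℕ} (A : Matrix (Fin N) (Fin N) ℝ) (J : Finset (Fin N))
    (hJ : minorP A J ≠ 0) (w : Fin N → ℝ) (hw : ∀ i ∉ J, w i = 0)
    (hAw : ∀ i ∈ J, ∑ j, A i j * w j = 0) : w = 0 := by
  have h1 : (fun l : {x // x ∈ J} => w l.1) = 0 := by
    refine Matrix.eq_zero_of_mulVec_eq_zero hJ ?_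
    funext k
    have h2 := hAw k.1 k.2
    rw [← Finset.sum_subset (Finset.subset_univ J)
      (fun x _ hx => by rw [hw x hx, mul_zero]), ← Finset.sum_coe_sort] at h2
    simpa [Matrix.mulVec, dotProduct] using h2
  funext i
  by_cases hi : i ∈ J
  · exact congrFun h1 ⟨i, hi⟩
  · exact hw i hi

/-- Schur complement: if `u` is supported in `J` and `f` vanishes on `J`, then `f j` is the
quotient of the bordered determinant by the principal minor. -/
lemma minorM_eq {N : ℕ} (A : Matrix (Fin N) (Fin N) ℝ) (m : Fin N → ℝ) (J : Finset (Fin N))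
    (hJ : minorP A J ≠ 0) (u : Fin N → ℝ) (hu : ∀ i ∉ J, u i = 0)
    (hf : ∀ i ∈ J, fComp A m u i = 0) (j : Fin N) :
    minorM A m J j = minorP A J * fComp A m u j := by
  have hsum : ∀ i, ∑ l, A i l * u l = ∑ l : {x // x ∈ J}, A i l.1 * u l.1 := by
    intro i
    rw [← Finset.sum_subset (Finset.subset_univ J)
      (fun x _ hx => by rw [hu x hx, mul_zero]), ← Finset.sum_coe_sort]
  set P : Matrix {x // x ∈ J} {x // x ∈ J} ℝ := Matrix.of fun i j => A i.1 j.1 with hP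
  have hdet : IsUnit P.det := isUnit_iff_ne_zero.2 hJ
  let _ : Invertible P := Matrix.invertibleOfIsUnitDet P hdet
  let b : Matrix {x // x ∈ J} PUnit.{1} ℝ := Matrix.of fun k _ => m k.1
  let c : Matrix PUnit.{1} {x // x ∈ J} ℝ := Matrix.of fun _ l => A j l.1
  let e : Matrix PUnit.{1} PUnit.{1} ℝ := Matrix.of fun _ _ => m j
  let U : Matrix {x // x ∈ J} PUnit.{1} ℝ := Matrix.of fun k _ => u k.1
  have hb : b = P * U := by
    ext k _
    have := hf k.1 k.2
    simp only [fComp, hsum] at this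
    simp only [Matrix.mul_apply, b, P, U, Matrix.of_apply]
    linarith
  have hM : minorM A m J j = (Matrix.fromBlocks P b c e).det := by
    unfold minorM
    rw [← Matrix.det_submatrix_equiv_self (Equiv.optionEquivSumPUnit.{0} {x // x ∈ J})]
    congr 1
    ext k l
    rcases k with _ | k <;> rcases l with _ | l <;> simp [P, b, c, e]
  rw [hM, Matrix.det_fromBlocks₁₁]
  have hU : ⅟P * b = U := by rw [hb, Matrix.invOf_mul_cancel_left]
  rw [Matrix.mul_assoc, hU]
  change P.det * _ = P.det * _
  congr 1
  rw [Matrix.det_unique]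
  simp [fComp, hsum, e, c, U, Matrix.mul_apply]

/-! ### Compactness of the admissible data -/

lemma IsAdmissible.le_m {N : ℕ} {κ : ℝ} {A : Matrix (Fin N) (Fin N) ℝ} {m : Fin N → ℝ}
    (h : IsAdmissible κ A m) (i : Fin N) : κ ≤ m i := by
  have h1 := h.2.2.2 ∅ i (by simp)
  have h2 : minorM A m ∅ i = m i := by
    rw [minorM_eq A m ∅ (by simp [minorP]) 0 (by simp) (by simp)]
    simp [minorP, fComp]
  rwa [h2] at h1

/-- Tuples of coefficients `A`, `m`, a vector `u` and a scalar parameter. Matrices are kept as plain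
functions so that closed order intervals are compact. -/
abbrev Data (N : ℕ) : Type := (Fin N → Fin N → ℝ) × (Fin N → ℝ) × (Fin N → ℝ) × ℝ

lemma continuous_minorP {N : ℕ} (J : Finset (Fin N)) :
    Continuous fun y : Data N => minorP (Matrix.of y.1) J := by
  unfold minorP
  refine Continuous.matrix_det ?_
  refine continuous_matrix fun i j => ?_
  simp only [Matrix.of_apply]
  fun_prop

lemma continuous_minorM {N : ℕ} (J : Finset (Fin N)) (j : Fin N) :
    Continuous fun y : Data N => minorM (Matrix.of y.1) y.2.1 J j := by
  unfold minorM
  refine Continuous.matrix_det ?_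
  refine continuous_matrix fun k l => ?_
  rcases k with _ | k <;> rcases l with _ | l <;> simp only [Matrix.of_apply] <;> fun_prop

/-- Admissible data with `0 ≤ u ≤ R` and scalar parameter in `[0, 1]`. -/
def admData (N : ℕ) (κ R : ℝ) : Set (Data N) :=
  {y | IsAdmissible κ (Matrix.of y.1) y.2.1 ∧ (∀ i, 0 ≤ y.2.2.1 i) ∧ (∀ i, y.2.2.1 i ≤ R) ∧
    0 ≤ y.2.2.2 ∧ y.2.2.2 ≤ 1}

lemma isCompact_admData (N : ℕ) (κ R : ℝ) : IsCompact (admData N κ R) := by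
  have hcl : IsClosed (admData N κ R) := by
    unfold admData IsAdmissible
    simp only [Matrix.of_apply, Set.ofPred_and, Set.ofPred_forall]
    refine ((isClosed_iInter fun i => isClosed_iInter fun j => ?_).inter
      ((isClosed_iInter fun i => ?_).inter ((isClosed_iInter fun I => ?_).inter
      (isClosed_iInter fun I => isClosed_iInter fun j => isClosed_iInter fun _ => ?_)))).inter
      ((isClosed_iInter fun i => ?_).inter ((isClosed_iInter fun i => ?_).inter (?_ : IsClosed _)))
    · exact isClosed_le (by fun_prop) (by fun_prop)
    · exact isClosed_le (by fun_prop) (by fun_prop)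
    · exact isClosed_le continuous_const (continuous_minorP I)
    · exact isClosed_le continuous_const (continuous_minorM I j)
    · exact isClosed_le (by fun_prop) (by fun_prop)
    · exact isClosed_le (by fun_prop) (by fun_prop)
    · exact (isClosed_le (by fun_prop) (by fun_prop)).inter
        (isClosed_le (by fun_prop) (by fun_prop))
  refine IsCompact.of_isClosed_subset (isCompact_Icc
    (a := ((fun _ _ => -(1 / κ), fun _ => κ, fun _ => 0, 0) : Data N))
    (b := ((fun _ _ => 1 / κ, fun _ => 1 / κ, fun _ => R, 1) : Data N))) hcl ?_
  rintro ⟨A, m, u, t⟩ ⟨hA, h0, hR, ht0, ht1⟩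
  exact ⟨⟨fun i j => (abs_le.1 (hA.1 i j)).1, fun i => hA.le_m i, h0, ht0⟩,
    ⟨fun i j => (abs_le.1 (hA.1 i j)).2, fun i => hA.2.1 i, hR, ht1⟩⟩

lemma exists_pos_le_of_isCompact {X : Type*} [TopologicalSpace X] {K : Set X} (hK : IsCompact K)
    {F : X → ℝ} (hF : Continuous F) (hpos : ∀ x ∈ K, 0 < F x) : ∃ c > 0, ∀ x ∈ K, c ≤ F x := by
  rcases K.eq_empty_or_nonempty with rfl | hne
  · exact ⟨1, one_pos, by simp⟩
  · obtain ⟨x, hx, hmin⟩ := hK.exists_isMinOn hne hF.continuousOn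
    exact ⟨F x, hpos x hx, fun y hy => hmin hy⟩

lemma exists_le_of_isCompact {X : Type*} [TopologicalSpace X] {K : Set X} (hK : IsCompact K)
    {F : X → ℝ} (hF : Continuous F) : ∃ C, ∀ x ∈ K, F x ≤ C := by
  obtain ⟨C, hC⟩ := hK.bddAbove_image hF.continuousOn
  exact ⟨C, fun x hx => hC (Set.mem_image_of_mem F hx)⟩

/-! ### Pointwise estimates -/

/-- The weighted sum `h = ∑ i, u i * |f i| ^ p`. -/
noncomputable def hFun {N : ℕ} (p : ℝ) (A : Matrix (Fin N) (Fin N) ℝ) (m u : Fin N → ℝ) : ℝ :=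
  ∑ i, u i * |fComp A m u i| ^ p

/-- The sum `g = ∑ i, |f i| ^ p`. -/
noncomputable def gFun {N : ℕ} (p : ℝ) (A : Matrix (Fin N) (Fin N) ℝ) (m u : Fin N → ℝ) : ℝ :=
  ∑ i, |fComp A m u i| ^ p

lemma continuous_fComp {N : ℕ} (i : Fin N) :
    Continuous fun y : Data N => fComp (Matrix.of y.1) y.2.1 y.2.2.1 i := by
  simp only [fComp, Matrix.of_apply]
  fun_prop

lemma continuous_hFun {N : ℕ} {p : ℝ} (hp : 1 ≤ p) :
    Continuous fun y : Data N => hFun p (Matrix.of y.1) y.2.1 y.2.2.1 := by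
  unfold hFun
  refine continuous_finsetSum _ fun i _ => ?_
  exact Continuous.mul (by fun_prop)
    ((continuous_fComp i).abs.rpow_const fun _ => Or.inr (by linarith))

lemma continuous_gFun {N : ℕ} {p : ℝ} (hp : 1 ≤ p) :
    Continuous fun y : Data N => gFun p (Matrix.of y.1) y.2.1 y.2.2.1 := by
  unfold gFun
  exact continuous_finsetSum _ fun i _ =>
    (continuous_fComp i).abs.rpow_const fun _ => Or.inr (by linarith)

lemma hFun_nonneg {N : ℕ} (p : ℝ) (A : Matrix (Fin N) (Fin N) ℝ) (m u : Fin N → ℝ)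
    (hu : ∀ i, 0 ≤ u i) : 0 ≤ hFun p A m u :=
  Finset.sum_nonneg fun i _ => mul_nonneg (hu i) (by positivity)

/-- If `h = 0`, then `u` and `f` are complementary. -/
lemma fComp_eq_zero_of_hFun {N : ℕ} {p : ℝ} (hp : 1 ≤ p) {A : Matrix (Fin N) (Fin N) ℝ}
    {m u : Fin N → ℝ} (hu : ∀ i, 0 ≤ u i) (h : hFun p A m u ≤ 0) (i : Fin N) (hi : u i ≠ 0) :
    fComp A m u i = 0 := by
  have h0 := le_antisymm h (hFun_nonneg p A m u hu)
  have h1 := (Finset.sum_eq_zero_iff_of_nonneg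
    (fun i _ => mul_nonneg (hu i) (by positivity))).1 h0 i (Finset.mem_univ i)
  have h2 := (mul_eq_zero.1 h1).resolve_left hi
  exact abs_eq_zero.1 ((Real.rpow_eq_zero (abs_nonneg _) (by linarith)).1 h2)

/-- Outside a large ball, `g ≤ h`, uniformly over admissible coefficients. -/
lemma exists_g_le_h {N : ℕ} (p κ : ℝ) (hp : 1 ≤ p) (hκ : 0 < κ) :
    ∃ R : ℝ, ∀ (A : Matrix (Fin N) (Fin N) ℝ) (m u : Fin N → ℝ), IsAdmissible κ A m →
      (∀ i, 0 ≤ u i) → R < ‖u‖ → gFun p A m u ≤ hFun p A m u := by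
  -- `T` rescales the data by `t = 1 / ‖u‖`, so that `f` is replaced by `t m - A w`, `‖w‖ = 1`.
  let T : Data N → Data N := fun y => (y.1, y.2.2.2 • y.2.1, y.2.2.1, 0)
  have hT : Continuous T := by fun_prop
  let K : Set (Data N) := admData N κ 1 ∩ ({y | ‖y.2.2.1‖ = 1} ∩
    {y | hFun p (Matrix.of (T y).1) (T y).2.1 (T y).2.2.1 ≤
      y.2.2.2 * gFun p (Matrix.of (T y).1) (T y).2.1 (T y).2.2.1})
  have hK : IsCompact K := by
    refine (isCompact_admData N κ 1).inter_right (IsClosed.inter ?_ ?_)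
    · exact isClosed_eq (by fun_prop) (by fun_prop)
    · exact isClosed_le ((continuous_hFun hp).comp hT)
        (Continuous.mul (by fun_prop) ((continuous_gFun hp).comp hT))
  obtain ⟨c, hc, hcK⟩ := exists_pos_le_of_isCompact hK (F := fun y => y.2.2.2) (by fun_prop) (by
    rintro ⟨A, m, w, t⟩ ⟨⟨hA, h0, h1, ht0, ht1⟩, hw, hle⟩
    refine lt_of_le_of_ne ht0 ?_
    rintro rfl
    simp only [T, zero_smul, Set.mem_ofPred_eq, zero_mul] at hle hw h0
    have hz := fComp_eq_zero_of_hFun hp h0 hle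
    have : w = 0 := by
      refine eq_zero_of_minorP_ne_zero (Matrix.of A) {i | w i ≠ 0}
        (lt_of_lt_of_le hκ (hA.2.2.1 _)).ne' w (by simp) ?_
      intro i hi
      have := hz i (by simpa using hi)
      simpa [fComp] using this
    simp [this] at hw)
  refine ⟨max 1 (1 / c), fun A m u hA hu hR => ?_⟩
  have hr1 : 1 < ‖u‖ := (le_max_left _ _).trans_lt hR
  have hrc : 1 / c < ‖u‖ := (le_max_right _ _).trans_lt hR
  have hr : 0 < ‖u‖ := by linarith
  by_contra hlt
  push Not at hlt
  have hfc : ∀ i, fComp A (‖u‖⁻¹ • m) (‖u‖⁻¹ • u) i = ‖u‖⁻¹ * fComp A m u i := by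
    intro i
    simp only [fComp, Pi.smul_apply, smul_eq_mul, mul_sub, Finset.mul_sum]
    congr 1
    exact Finset.sum_congr rfl fun j _ => by ring
  have hfp : ∀ i, |fComp A (‖u‖⁻¹ • m) (‖u‖⁻¹ • u) i| ^ p =
      (‖u‖⁻¹) ^ p * |fComp A m u i| ^ p := by
    intro i
    rw [hfc, abs_mul, abs_of_pos (inv_pos.2 hr), Real.mul_rpow (by positivity) (abs_nonneg _)]
  have hmem : ((A, m, ‖u‖⁻¹ • u, ‖u‖⁻¹) : Data N) ∈ K := by
    refine ⟨⟨hA, fun i => ?_, fun i => ?_, ?_, ?_⟩, ?_, ?_⟩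
    · exact mul_nonneg (by positivity) (hu i)
    · change ‖u‖⁻¹ * u i ≤ 1
      rw [inv_mul_le_iff₀ hr, mul_one]
      exact (le_abs_self _).trans (norm_le_pi_norm u i)
    · exact (inv_pos.2 hr).le
    · exact inv_le_one_of_one_le₀ hr1.le
    · change ‖‖u‖⁻¹ • u‖ = 1
      rw [norm_smul, norm_inv, norm_norm, inv_mul_cancel₀ hr.ne']
    · change hFun p A (‖u‖⁻¹ • m) (‖u‖⁻¹ • u) ≤ ‖u‖⁻¹ * gFun p A (‖u‖⁻¹ • m) (‖u‖⁻¹ • u)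
      have e1 : hFun p A (‖u‖⁻¹ • m) (‖u‖⁻¹ • u) = ‖u‖⁻¹ * (‖u‖⁻¹) ^ p * hFun p A m u := by
        simp only [hFun, hfp, Finset.mul_sum, Pi.smul_apply, smul_eq_mul]
        exact Finset.sum_congr rfl fun j _ => by ring
      have e2 : gFun p A (‖u‖⁻¹ • m) (‖u‖⁻¹ • u) = (‖u‖⁻¹) ^ p * gFun p A m u := by
        simp only [gFun, hfp, Finset.mul_sum]
      rw [e1, e2, ← mul_assoc]
      exact mul_le_mul_of_nonneg_left hlt.le (by positivity)
  have h1 : c ≤ ‖u‖⁻¹ := hcK _ hmem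
  rw [one_div] at hrc
  have h2 : ‖u‖⁻¹ < c := inv_lt_of_inv_lt₀ hc hrc
  linarith

lemma mem_admData {N : ℕ} {κ R : ℝ} {A : Matrix (Fin N) (Fin N) ℝ} {m u : Fin N → ℝ}
    (hA : IsAdmissible κ A m) (hu : ∀ i, 0 ≤ u i) (hR : ‖u‖ ≤ R) :
    ((A, m, u, 0) : Data N) ∈ admData N κ R :=
  ⟨hA, hu, fun i => ((le_abs_self _).trans (norm_le_pi_norm u i)).trans hR, le_rfl, zero_le_one⟩

lemma exists_g_le {N : ℕ} (p κ : ℝ) (hp : 1 ≤ p) (hκ : 0 < κ) :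
    ∃ C : ℝ, 0 ≤ C ∧ ∀ (A : Matrix (Fin N) (Fin N) ℝ) (m u : Fin N → ℝ), IsAdmissible κ A m →
      (∀ i, 0 ≤ u i) → gFun p A m u ≤ C + hFun p A m u := by
  obtain ⟨R, hR⟩ := exists_g_le_h (N := N) p κ hp hκ
  obtain ⟨C, hC⟩ := exists_le_of_isCompact (isCompact_admData N κ R)
    (continuous_gFun (N := N) hp)
  refine ⟨max C 0, le_max_right _ _, fun A m u hA hu => ?_⟩
  have h0 := hFun_nonneg p A m u hu
  rcases lt_or_ge R ‖u‖ with h | h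
  · have := hR A m u hA hu h
    have := le_max_right C 0
    linarith
  · have h1 : gFun p A m u ≤ C := hC (A, m, u, 0) (mem_admData hA hu h)
    have := le_max_left C 0
    linarith

/-- The vector `f` has components larger than `σ` on `I` and smaller than `σ / 2` in absolute value
off `I`; the set `A(I)` consists of the points of `Ω` with this property. -/
def InA {N : ℕ} (σ : ℝ) (f : Fin N → ℝ) (I : Finset (Fin N)) : Prop :=
  (∀ i ∈ I, σ < f i) ∧ ∀ j ∉ I, |f j| < σ / 2

lemma exists_h_ge {N : ℕ} (p κ : ℝ) (hp : 1 ≤ p) (hκ : 0 < κ) :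
    ∃ σ c : ℝ, 0 < σ ∧ 0 < c ∧ ∀ (A : Matrix (Fin N) (Fin N) ℝ) (m u : Fin N → ℝ),
      IsAdmissible κ A m → (∀ i, 0 ≤ u i) → (∀ I, ¬ InA σ (fComp A m u) I) →
      c ≤ hFun p A m u := by
  obtain ⟨R, hR⟩ := exists_g_le_h (N := N) p κ hp hκ
  -- A common upper bound for all principal minors fixes the threshold `σ < κ / Δ_J`.
  obtain ⟨M, hM⟩ := exists_le_of_isCompact (isCompact_admData N κ R)
    (F := fun y : Data N => ∑ J, |minorP (Matrix.of y.1) J|)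
    (continuous_finsetSum _ fun J _ => (continuous_minorP J).abs)
  set M' := max M 1
  have hM' : 0 < M' := lt_of_lt_of_le one_pos (le_max_right _ _)
  let σ := κ / (2 * M')
  have hσ : 0 < σ := by positivity
  let K : Set (Data N) := admData N κ R ∩
    {y | ∀ I, ¬ InA σ (fComp (Matrix.of y.1) y.2.1 y.2.2.1) I}
  have hK : IsCompact K := by
    refine (isCompact_admData N κ R).inter_right ?_
    simp only [Set.ofPred_forall]
    refine isClosed_iInter fun I => ?_
    rw [← isOpen_compl_iff]
    simp only [Set.compl_ofPred, not_not, InA, Set.ofPred_and, Set.ofPred_forall]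
    refine IsOpen.inter ?_ ?_
    · exact isOpen_iInter_of_finite fun i => isOpen_iInter_of_finite fun _ =>
        isOpen_lt continuous_const (continuous_fComp i)
    · exact isOpen_iInter_of_finite fun i => isOpen_iInter_of_finite fun _ =>
        isOpen_lt (continuous_fComp i).abs continuous_const
  obtain ⟨c, hc, hcK⟩ := exists_pos_le_of_isCompact hK (continuous_hFun hp) (by
    rintro ⟨A, m, u, t⟩ ⟨hy, hbad⟩
    obtain ⟨hA, hu, -, -, -⟩ := id hy
    by_contra hle
    push Not at hle
    simp only [Set.mem_ofPred_eq] at hA hu hle hbad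
    have hz := fComp_eq_zero_of_hFun hp hu hle
    let J : Finset (Fin N) := {i | u i ≠ 0}
    have hJ0 : 0 < minorP (Matrix.of A) J := lt_of_lt_of_le hκ (hA.2.2.1 J)
    have hJM : minorP (Matrix.of A) J ≤ M' := by
      have h1 : ∑ J, |minorP (Matrix.of A) J| ≤ M := hM (A, m, u, t) hy
      have h2 := Finset.single_le_sum (f := fun J => |minorP (Matrix.of A) J|)
        (fun _ _ => abs_nonneg _) (Finset.mem_univ J)
      have h4 := le_abs_self (minorP (Matrix.of A) J)
      have h5 : M ≤ M' := le_max_left _ _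
      linarith
    refine hbad Jᶜ ⟨fun j hj => ?_, fun j hj => ?_⟩
    · have h1 := hA.2.2.2 J j (by simpa using hj)
      rw [minorM_eq (Matrix.of A) m J hJ0.ne' u (by simp [J])
        (fun i hi => hz i (by simpa [J] using hi)) j] at h1
      have hfj : 0 < fComp (Matrix.of A) m u j :=
        pos_of_mul_pos_right (hκ.trans_le h1) hJ0.le
      have h3 := h1.trans (mul_le_mul_of_nonneg_right hJM hfj.le)
      change κ / (2 * M') < _
      rw [div_lt_iff₀ (by positivity)]
      nlinarith
    · rw [hz j (by simpa [J] using hj), abs_zero]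
      positivity)
  refine ⟨σ, min c ((σ / 2) ^ p), hσ, by positivity, fun A m u hA hu hbad => ?_⟩
  rcases lt_or_ge R ‖u‖ with h | h
  · refine (min_le_right _ _).trans (le_trans ?_ (hR A m u hA hu h))
    -- Failure of membership in `A(∅)` makes some `|f j|` at least `σ / 2`.
    have h1 := hbad ∅
    simp only [InA, Finset.notMem_empty, false_imp_iff, implies_true, true_and, not_false_eq_true,
      forall_const, not_forall, not_lt] at h1
    obtain ⟨j, hj⟩ := h1
    refine (Real.rpow_le_rpow (by positivity) hj (by linarith)).trans ?_
    exact Finset.single_le_sum (f := fun i => |fComp A m u i| ^ p)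
      (fun _ _ => by positivity) (Finset.mem_univ j)
  · exact (min_le_left _ _).trans (hcK (A, m, u, 0) ⟨mem_admData hA hu h, hbad⟩)


/-- There is `σ > 0` depending only on `N`, `p`, `κ` such that in the sequence setup,
with `A_n(I) = (⋂_{i ∈ I} {f_{in} > σ}) ∩ (⋂_{j ∉ I} {|f_{jn}| < σ/2})`, one has
`Σ_{I ⊆ {1,…,N}} |A_n(I)| → |Ω|` as `n → ∞`. -/
theorem sum_measures_An_tendsto_measure_Omega {N : ℕ} (hN : 0 < N)
    (p κ : ℝ) (hp : 1 ≤ p) (hκ : 0 < κ) :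
    ∃ σ : ℝ, 0 < σ ∧
      ∀ (d : ℕ) (Ω : Set (Fin d → ℝ)), IsOpen Ω → Bornology.IsBounded Ω →
      ∀ (A : ℕ → (Fin d → ℝ) → Matrix (Fin N) (Fin N) ℝ)
        (m : ℕ → (Fin d → ℝ) → Fin N → ℝ)
        (u : ℕ → (Fin d → ℝ) → Fin N → ℝ),
        (∀ n i j, Measurable fun x => A n x i j) →
        (∀ n i, Measurable fun x => m n x i) →
        (∀ n i, Measurable fun x => u n x i) →
        (∀ n, ∀ x ∈ Ω, IsAdmissible κ (A n x) (m n x)) →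
        (∀ n, ∀ x ∈ Ω, ∀ i, 0 ≤ u n x i) →
      ∀ eps : ℕ → ℝ, (∀ n, eps n ∈ Set.Ioo (0 : ℝ) 1) →
        Tendsto eps atTop (nhds 0) →
        (∀ n, ∫⁻ x in Ω, ENNReal.ofReal (gSeq (A n) (m n) (u n) p x) < ⊤) →
        (∀ n,
          ∫⁻ x in Ω, ENNReal.ofReal (∑ i, u n x i * |fSeq (A n) (m n) (u n) x i| ^ p) ≤
            ENNReal.ofReal (eps n ^ 2) *
              ∫⁻ x in Ω, ENNReal.ofReal (gSeq (A n) (m n) (u n) p x)) →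
        Tendsto (fun n => ∑ I : Finset (Fin N),
            volume ((⋂ i ∈ I, {x ∈ Ω | σ < fSeq (A n) (m n) (u n) x i}) ∩
              ⋂ j ∈ Iᶜ, {x ∈ Ω | |fSeq (A n) (m n) (u n) x j| < σ / 2}))
          atTop (nhds (volume Ω)) := by
  obtain ⟨σ, c, hσ, hc, hcbad⟩ := exists_h_ge (N := N) p κ hp hκ
  obtain ⟨C, hC0, hC⟩ := exists_g_le (N := N) p κ hp hκ
  refine ⟨σ, hσ, ?_⟩
  intro d Ω hΩ hΩb A m u hAm hmm hum hadm hu0 eps heps heps0 hfin hint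
  have hΩfin : volume Ω ≠ ⊤ := hΩb.measure_lt_top.ne
  set S : ℕ → Finset (Fin N) → Set (Fin d → ℝ) := fun n I =>
    (⋂ i ∈ I, {x ∈ Ω | σ < fSeq (A n) (m n) (u n) x i}) ∩
              ⋂ j ∈ Iᶜ, {x ∈ Ω | |fSeq (A n) (m n) (u n) x j| < σ / 2} with hS
  change Tendsto (fun n => ∑ I, volume (S n I)) atTop _
  have hfm : ∀ n i, Measurable fun x => fSeq (A n) (m n) (u n) x i := by
    intro n i
    unfold fSeq
    exact (hmm n i).sub (Finset.measurable_fun_sum _ fun j _ => (hAm n i j).mul (hum n j))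
  have hSm : ∀ n I, MeasurableSet (S n I) := by
    intro n I
    refine MeasurableSet.inter ?_ ?_
    · exact Finset.measurableSet_biInter _ fun i _ =>
        hΩ.measurableSet.inter (measurableSet_lt measurable_const (hfm n i))
    · exact Finset.measurableSet_biInter _ fun i _ =>
        hΩ.measurableSet.inter (measurableSet_lt (hfm n i).abs measurable_const)
  have hSmem : ∀ n I x, x ∈ S n I ↔ x ∈ Ω ∧ InA σ (fSeq (A n) (m n) (u n) x) I := by
    intro n I x
    simp only [hS, InA, Set.mem_inter_iff, Set.mem_iInter, Set.mem_ofPred_eq, Finset.mem_compl]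
    constructor
    · rintro ⟨h1, h2⟩
      refine ⟨?_, fun i hi => (h1 i hi).2, fun j hj => (h2 j hj).2⟩
      -- There is an index, since `0 < N`; it lies in `I` or in its complement.
      by_cases h : (⟨0, hN⟩ : Fin N) ∈ I
      · exact (h1 _ h).1
      · exact (h2 _ h).1
    · rintro ⟨h0, h1, h2⟩
      exact ⟨fun i hi => ⟨h0, h1 i hi⟩, fun j hj => ⟨h0, h2 j hj⟩⟩
  have hdisj : ∀ n, Pairwise (Function.onFun Disjoint (S n)) := by
    intro n I I' hne
    refine Set.disjoint_left.2 fun x hx hx' => hne ?_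
    obtain ⟨-, h1, h2⟩ := (hSmem n I x).1 hx
    obtain ⟨-, h1', h2'⟩ := (hSmem n I' x).1 hx'
    ext i
    constructor
    · intro hi
      by_contra hi'
      linarith [h1 i hi, (le_abs_self _).trans_lt (h2' i hi')]
    · intro hi
      by_contra hi'
      linarith [h1' i hi, (le_abs_self _).trans_lt (h2 i hi')]
  have hsum : ∀ n, ∑ I, volume (S n I) = volume (⋃ I, S n I) := by
    intro n
    rw [measure_iUnion (hdisj n) (hSm n), tsum_fintype]
  set B : ℕ → Set (Fin d → ℝ) := fun n => Ω \ ⋃ I, S n I with hB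
  have hBm : ∀ n, MeasurableSet (B n) := fun n =>
    hΩ.measurableSet.diff (MeasurableSet.iUnion (hSm n))
  have hcB : ∀ n, ENNReal.ofReal c * volume (B n) ≤
      ∫⁻ x in Ω, ENNReal.ofReal (∑ i, u n x i * |fSeq (A n) (m n) (u n) x i| ^ p) := by
    intro n
    rw [← setLIntegral_const]
    refine (setLIntegral_mono' (hBm n) fun x hx => ?_).trans (lintegral_mono_set Set.sdiff_subset)
    refine ENNReal.ofReal_le_ofReal (hcbad (A n x) (m n x) (u n x) (hadm n x hx.1)
      (hu0 n x hx.1) fun I hI => hx.2 (Set.mem_iUnion.2 ⟨I, (hSmem n I x).2 ⟨hx.1, hI⟩⟩))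
  have hsmall : ∀ᶠ n in atTop, eps n ^ 2 ≤ 1 / 2 := by
    have h1 : Tendsto (fun n => eps n ^ 2) atTop (nhds 0) := by simpa using heps0.pow 2
    exact h1.eventually_le_const (by norm_num)
  have hG : ∀ᶠ n in atTop, ∫⁻ x in Ω, ENNReal.ofReal (gSeq (A n) (m n) (u n) p x) ≤
      ENNReal.ofReal (2 * C) * volume Ω := by
    filter_upwards [hsmall] with n hn
    set G := ∫⁻ x in Ω, ENNReal.ofReal (gSeq (A n) (m n) (u n) p x) with hGdef
    have h1 : G ≤ ENNReal.ofReal C * volume Ω + ENNReal.ofReal (1 / 2) * G := by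
      calc G ≤ ∫⁻ x in Ω, (ENNReal.ofReal C +
            ENNReal.ofReal (∑ i, u n x i * |fSeq (A n) (m n) (u n) x i| ^ p)) := by
            refine setLIntegral_mono' hΩ.measurableSet fun x hx => ?_
            change _ ≤ _ + ENNReal.ofReal (hFun p (A n x) (m n x) (u n x))
            rw [← ENNReal.ofReal_add hC0 (hFun_nonneg p (A n x) (m n x) (u n x) (hu0 n x hx))]
            exact ENNReal.ofReal_le_ofReal (hC _ _ _ (hadm n x hx) (hu0 n x hx))
        _ = ENNReal.ofReal C * volume Ω +
            ∫⁻ x in Ω, ENNReal.ofReal (∑ i, u n x i * |fSeq (A n) (m n) (u n) x i| ^ p) := by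
            rw [lintegral_add_left measurable_const, setLIntegral_const]
        _ ≤ _ := by
            gcongr
            refine (hint n).trans ?_
            gcongr
    lift G to NNReal using (hfin n).ne with G'
    lift volume Ω to NNReal using hΩfin with V
    rw [ENNReal.ofReal, ENNReal.ofReal, ← ENNReal.coe_mul, ← ENNReal.coe_mul, ← ENNReal.coe_add,
      ENNReal.coe_le_coe, ← NNReal.coe_le_coe] at h1
    rw [ENNReal.ofReal, ← ENNReal.coe_mul, ENNReal.coe_le_coe, ← NNReal.coe_le_coe]
    push_cast at h1 ⊢
    rw [Real.coe_toNNReal _ hC0, Real.coe_toNNReal _ (by norm_num)] at h1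
    rw [Real.coe_toNNReal _ (by linarith)]
    linarith
  have hB0 : Tendsto (fun n => volume (B n)) atTop (nhds 0) := by
    have hlim : Tendsto (fun n => (ENNReal.ofReal c)⁻¹ *
        (ENNReal.ofReal (eps n ^ 2) * (ENNReal.ofReal (2 * C) * volume Ω))) atTop (nhds 0) := by
      have h1 : Tendsto (fun n => ENNReal.ofReal (eps n ^ 2)) atTop (nhds 0) := by
        have := ENNReal.tendsto_ofReal (heps0.pow 2)
        simpa using this
      have h2 := ENNReal.Tendsto.mul_const h1 (b := ENNReal.ofReal (2 * C) * volume Ω)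
        (Or.inr (ENNReal.mul_ne_top ENNReal.ofReal_ne_top hΩfin))
      have h3 := ENNReal.Tendsto.const_mul h2 (a := (ENNReal.ofReal c)⁻¹)
        (Or.inr (ENNReal.inv_ne_top.2 (ENNReal.ofReal_pos.2 hc).ne'))
      simpa using h3
    refine tendsto_of_tendsto_of_tendsto_of_le_of_le' tendsto_const_nhds hlim
      (Eventually.of_forall fun _ => zero_le) ?_
    filter_upwards [hG] with n hn
    have h1 : ENNReal.ofReal c * volume (B n) ≤
        ENNReal.ofReal (eps n ^ 2) * (ENNReal.ofReal (2 * C) * volume Ω) :=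
      ((hcB n).trans (hint n)).trans (by gcongr)
    rw [mul_comm _ (volume (B n)), ← ENNReal.le_div_iff_mul_le
      (Or.inl (ENNReal.ofReal_pos.2 hc).ne') (Or.inl ENNReal.ofReal_ne_top)] at h1
    rwa [ENNReal.div_eq_inv_mul] at h1
  have hlow : Tendsto (fun n => volume Ω - volume (B n)) atTop (nhds (volume Ω)) := by
    simpa using ENNReal.Tendsto.sub (tendsto_const_nhds (x := volume Ω)) hB0 (Or.inl hΩfin)
  refine tendsto_of_tendsto_of_tendsto_of_le_of_le hlow tendsto_const_nhds (fun n => ?_)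
    (fun n => ?_)
  · change _ ≤ ∑ I, volume (S n I)
    rw [hsum, tsub_le_iff_right]
    refine (measure_mono ?_).trans (measure_union_le _ _)
    rw [hB, Set.union_sdiff_self]
    exact Set.subset_union_right
  · change ∑ I, volume (S n I) ≤ _
    rw [hsum]
    exact measure_mono (Set.iUnion_subset fun I x hx => ((hSmem n I x).1 hx).1)
end

section
/- Let Ω ⊂ ℝ^d be open, let f_1,…,f_N : Ω → ℝ and u_1,…,u_N : Ω → ℝ be continuous with u_i ≥ 0, and let σ > 0 and ε ∈ (0, σ] be such that the following condition holds: for every x ∈ Ω and every index i, if f_i(x) ≤ σ and u_i(x) ≤ σ, then there exists an index j with f_j(x) ≤ −σ. Then for every t ∈ (σ/2, σ), the boundary relative to Ω of the open set A(t) = ⋃_{i=1}^N {x ∈ Ω : |f_i(x)| > t} is contained in ⋂_{i=1}^N {x ∈ Ω : u_i(x) > ε}. -/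
/-- If for every `x ∈ Ω` and every `i`, `f_i(x) ≤ σ` and `u_i(x) ≤ σ` imply that some
`f_j(x) ≤ -σ`, then for `t ∈ (σ/2, σ)` the boundary relative to `Ω` of
`A(t) = ⋃_i {x ∈ Ω : |f_i(x)| > t}` is contained in `⋂_i {x ∈ Ω : u_i(x) > ε}`. -/
theorem frontier_union_superlevel_subset {d N : ℕ} (Ω : Set (Fin d → ℝ)) (hΩ : IsOpen Ω)
    (f u : Fin N → (Fin d → ℝ) → ℝ)
    (hf : ∀ i, ContinuousOn (f i) Ω) (hu : ∀ i, ContinuousOn (u i) Ω)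
    (hu0 : ∀ i, ∀ x ∈ Ω, 0 ≤ u i x)
    (σ ε : ℝ) (hσ : 0 < σ) (hε : ε ∈ Set.Ioc 0 σ)
    (hcond : ∀ x ∈ Ω, ∀ i, f i x ≤ σ → u i x ≤ σ → ∃ j, f j x ≤ -σ) :
    ∀ t ∈ Set.Ioo (σ / 2) σ,
      Ω ∩ frontier (⋃ i, {x ∈ Ω | t < |f i x|}) ⊆ ⋂ i, {x ∈ Ω | ε < u i x} := by
  intro t ht x ⟨hxΩ, hx⟩
  have hopen : IsOpen (⋃ i, {x ∈ Ω | t < |f i x|}) :=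
    isOpen_iUnion fun i => (hf i).abs.isOpen_inter_preimage hΩ isOpen_Ioi
  -- An open set misses its frontier, so `|f j x| ≤ t < σ` for every `j`; in particular no
  -- `f j x` can be `≤ -σ`, and `hcond` then rules out `u i x ≤ ε ≤ σ`.
  have hle : ∀ j, |f j x| ≤ t := by
    intro j
    by_contra! h
    rw [hopen.frontier_eq] at hx
    exact hx.2 (Set.mem_iUnion.2 ⟨j, hxΩ, h⟩)
  refine Set.mem_iInter.2 fun i => ⟨hxΩ, ?_⟩
  by_contra! h
  obtain ⟨j, hj⟩ := hcond x hxΩ i ((abs_le.1 (hle i)).2.trans ht.2.le) (h.trans hε.2)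
  linarith [(abs_le.1 (hle j)).1, ht.2]
end

section
/- Let Ω ⊂ ℝ^d be open, let f_1,…,f_N : Ω → ℝ and u_1,…,u_N : Ω → ℝ be continuous with u_i ≥ 0, and let σ > 0 and ε ∈ (0, σ] be such that the following condition holds: for every x ∈ Ω and every index i, if f_i(x) ≤ σ and u_i(x) ≤ σ, then there exists an index j with f_j(x) ≤ −σ. For t ∈ (σ/2, σ) define A(t) = {x ∈ Ω : f_1(x) > t} ∪ ⋃_{i=1}^N {x ∈ Ω : f_i(x) < −t}. Then for every t ∈ (σ/2, σ): ∂_Ω A(t) ∩ ∂_Ω {x ∈ Ω : f_1(x) > t} ⊆ {x ∈ Ω : u_1(x) > ε}, and for every i ∈ {1,…,N}, ∂_Ω A(t) ∩ ∂_Ω {x ∈ Ω : f_i(x) < −t} ⊆ {x ∈ Ω : u_i(x) > ε}. -/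
/-!
`A(t)` is open, so a point `x ∈ Ω` of its frontier lies outside `A(t)`: hence `f_1(x) ≤ t < σ`
and `f_j(x) ≥ -t > -σ` for all `j`. The hypothesis then forces `u_i(x) > σ ≥ ε` for every `i` with
`f_i(x) ≤ σ`. This holds for `i = 1`, and for any `i` with `x` in the closure of `{f_i < -t}`,
where `f_i(x) ≤ -t`.
-/

/-- If for every `x ∈ Ω` and every `i`, `f_i(x) ≤ σ` and `u_i(x) ≤ σ` imply that some
`f_j(x) ≤ -σ`, then for `t ∈ (σ/2, σ)` and
`A(t) = {x ∈ Ω : f_1(x) > t} ∪ ⋃_i {x ∈ Ω : f_i(x) < -t}` we have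
`∂_Ω A(t) ∩ ∂_Ω {f_1 > t} ⊆ {u_1 > ε}` and `∂_Ω A(t) ∩ ∂_Ω {f_i < -t} ⊆ {u_i > ε}`
for every `i`. -/
theorem frontier_mixed_level_sets_subset {d N : ℕ} (hN : 0 < N)
    (Ω : Set (Fin d → ℝ)) (hΩ : IsOpen Ω)
    (f u : Fin N → (Fin d → ℝ) → ℝ)
    (hf : ∀ i, ContinuousOn (f i) Ω) (hu : ∀ i, ContinuousOn (u i) Ω)
    (hu0 : ∀ i, ∀ x ∈ Ω, 0 ≤ u i x)
    (σ ε : ℝ) (hσ : 0 < σ) (hε : ε ∈ Set.Ioc 0 σ)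
    (hcond : ∀ x ∈ Ω, ∀ i, f i x ≤ σ → u i x ≤ σ → ∃ j, f j x ≤ -σ) :
    ∀ t ∈ Set.Ioo (σ / 2) σ,
      ((Ω ∩ frontier ({x ∈ Ω | t < f ⟨0, hN⟩ x} ∪ ⋃ i, {x ∈ Ω | f i x < -t})) ∩
          (Ω ∩ frontier {x ∈ Ω | t < f ⟨0, hN⟩ x}) ⊆ {x ∈ Ω | ε < u ⟨0, hN⟩ x}) ∧
      ∀ i : Fin N,
        (Ω ∩ frontier ({x ∈ Ω | t < f ⟨0, hN⟩ x} ∪ ⋃ k, {x ∈ Ω | f k x < -t})) ∩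
          (Ω ∩ frontier {x ∈ Ω | f i x < -t}) ⊆ {x ∈ Ω | ε < u i x} := by
  rintro t ⟨ht1, ht2⟩
  have hlt : ∀ i, IsOpen {x ∈ Ω | f i x < -t} := fun i =>
    (hf i).isOpen_inter_preimage hΩ isOpen_Iio
  have hgt : ∀ i s, IsOpen {x ∈ Ω | s < f i x} := fun i s =>
    (hf i).isOpen_inter_preimage hΩ isOpen_Ioi
  have hA : IsOpen ({x ∈ Ω | t < f ⟨0, hN⟩ x} ∪ ⋃ i, {x ∈ Ω | f i x < -t}) :=
    (hgt _ t).union (isOpen_iUnion hlt)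
  have hout : ∀ x ∈ Ω, x ∈ frontier ({x ∈ Ω | t < f ⟨0, hN⟩ x} ∪ ⋃ i, {x ∈ Ω | f i x < -t}) →
      f ⟨0, hN⟩ x ≤ t ∧ ∀ j, -t ≤ f j x := by
    intro x hx hfr
    rw [hA.frontier_eq] at hfr
    have hn := hfr.2
    exact ⟨not_lt.1 fun h => hn (Or.inl ⟨hx, h⟩),
      fun j => not_lt.1 fun h => hn (Or.inr (Set.mem_iUnion.2 ⟨j, hx, h⟩))⟩
  have key : ∀ x ∈ Ω, (∀ j, -t ≤ f j x) → ∀ i, f i x ≤ σ → ε < u i x := by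
    intro x hx hj i hi
    by_contra! hle
    obtain ⟨j, h⟩ := hcond x hx i hi (hle.trans hε.2)
    linarith [hj j]
  refine ⟨?_, fun i => ?_⟩
  · rintro x ⟨⟨hx, hfr⟩, -⟩
    obtain ⟨h0, hj⟩ := hout x hx hfr
    exact ⟨hx, key x hx hj _ (by linarith)⟩
  · rintro x ⟨⟨hx, hfr⟩, -, hfi⟩
    obtain ⟨-, hj⟩ := hout x hx hfr
    refine ⟨hx, key x hx hj i ?_⟩
    by_contra! hi
    -- Otherwise `{f i > -t}` is a neighbourhood of `x` disjoint from `{f i < -t}`.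
    obtain ⟨y, hy1, hy2⟩ := mem_closure_iff.1 (frontier_subset_closure hfi) _ (hgt i (-t))
      ⟨hx, by linarith⟩
    exact lt_asymm hy1.2 hy2.2
end

section
/- Let Ω ⊂ ℝ^d be a bounded open set of finite Lebesgue measure, and let (A, m) with A = (a_{ij}) ∈ C(Ω̄; M_N(ℝ)) and m ∈ C(Ω̄; ℝ^N) be admissible with constant κ at every point of Ω̄. For I ⊆ {1,…,N}, let u_I : Ω̄ → ℝ^N be the (pointwise unique) solution of u_{I,i}(x) = 0 (i ∈ I) and m_j(x) − Σ_k a_{jk}(x) u_{I,k}(x) = 0 (j ∉ I). Let (u_n) be a sequence of measurable functions Ω → ℝ^N, set f_{in}(x) = m_i(x) − Σ_j a_{ij}(x) u_{jn}(x), and fix I ⊆ {1,…,N}. Then the following are equivalent: (a) u_{in} → 0 in measure on Ω for every i ∈ I and f_{jn} → 0 in measure on Ω for every j ∉ I; (b) u_n → u_I in measure on Ω. -/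
/-!
Let `B(x)` be the matrix whose `i`-th row is the unit vector `e_i` for `i ∈ I` and the `j`-th row
of `A(x)` for `j ∉ I`. Since `u_I` solves its defining system, `v_n := B (u_n - u_I)` has
components `u_{in}` for `i ∈ I` and `-f_{jn}` for `j ∉ I`, so (a) says that `v_n → 0` in measure
(`tendstoInMeasure_pi_iff`), while (b) says that `u_n - u_I → 0` in measure.

The two are equivalent because `‖B w‖` and `‖w‖` are comparable uniformly on `Ω`: the entries of
`B` are continuous on the compact set `Ω̄`, hence bounded, and so are those of its adjugate, while
`det B` is the principal minor of `A` over the complement of `I` (`det_mixedMatrix`), so that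
`κ ‖w‖ ≤ ‖det B • w‖ = ‖adj(B) (B w)‖`.
-/

open MeasureTheory Filter

/-- The coefficient matrix of the system defining `u_I`: rows in `I` are those of the identity,
the other rows are those of `A`. -/
def mixedMatrix {N : ℕ} (A : Matrix (Fin N) (Fin N) ℝ) (I : Finset (Fin N)) :
    Matrix (Fin N) (Fin N) ℝ :=
  Matrix.of fun i j => if i ∈ I then (1 : Matrix (Fin N) (Fin N) ℝ) i j else A i j

lemma mixedMatrix_mulVec {N : ℕ} (A : Matrix (Fin N) (Fin N) ℝ) (I : Finset (Fin N))
    (w : Fin N → ℝ) (i : Fin N) :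
    (mixedMatrix A I).mulVec w i = if i ∈ I then w i else ∑ j, A i j * w j := by
  by_cases h : i ∈ I <;> simp [mixedMatrix, Matrix.mulVec, dotProduct, h, Matrix.one_apply]

/-- Ordering the indices with those outside `I` first, the mixed matrix is block triangular with
an identity block on `I`. -/
lemma det_mixedMatrix {N : ℕ} (A : Matrix (Fin N) (Fin N) ℝ) (I : Finset (Fin N)) :
    (mixedMatrix A I).det = minorP A Iᶜ := by
  rw [Matrix.twoBlockTriangular_det (mixedMatrix A I) (fun i => i ∉ I)]
  · have h1 : Matrix.toSquareBlockProp (mixedMatrix A I) (fun i => ¬ i ∉ I) = 1 := by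
      ext i j
      have hi : i.1 ∈ I := not_not.mp i.2
      simp [Matrix.toSquareBlockProp, mixedMatrix, hi, Matrix.one_apply, Subtype.ext_iff]
    rw [h1, Matrix.det_one, mul_one, minorP,
      ← Matrix.det_submatrix_equiv_self
        (Equiv.subtypeEquivRight (fun i : Fin N => (Finset.mem_compl (s := I) (a := i))))]
    congr 1
    ext i j
    have hi : i.1 ∉ I := Finset.mem_compl.mp i.2
    simp [Matrix.toSquareBlockProp, mixedMatrix, hi]
  · intro i hi j hj
    have hi' : i ∈ I := not_not.mp hi
    have hij : i ≠ j := fun h => hj (h ▸ hi')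
    simp [mixedMatrix, hi', hij]

lemma exists_mulVec_bound {X : Type*} [TopologicalSpace X] {N : ℕ} {K : Set X}
    (hK : IsCompact K) {M : X → Matrix (Fin N) (Fin N) ℝ} (hM : ContinuousOn M K) :
    ∃ C : ℝ, 0 ≤ C ∧ ∀ x ∈ K, ∀ w, ‖(M x).mulVec w‖ ≤ C * ‖w‖ := by
  have hent : ∀ i j, ∃ c : ℝ, ∀ x ∈ K, ‖M x i j‖ ≤ c := fun i j =>
    hK.exists_bound_of_continuousOn
      ((continuous_id.matrix_elem i j).comp_continuousOn hM)
  choose c hc using hent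
  have hsum : ∀ i, ∑ j, |c i j| ≤ ∑ i, ∑ j, |c i j| := fun i =>
    Finset.single_le_sum (f := fun i => ∑ j, |c i j|)
      (fun i _ => Finset.sum_nonneg fun j _ => abs_nonneg _) (Finset.mem_univ i)
  have h0 : 0 ≤ ∑ i, ∑ j, |c i j| :=
    Finset.sum_nonneg fun i _ => Finset.sum_nonneg fun j _ => abs_nonneg _
  refine ⟨_, h0, fun x hx w => (pi_norm_le_iff_of_nonneg (by positivity)).2 fun i => ?_⟩
  calc ‖(M x).mulVec w i‖ ≤ ∑ j, ‖M x i j * w j‖ :=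
        norm_sum_le Finset.univ fun j => M x i j * w j
    _ ≤ ∑ j, |c i j| * ‖w‖ := by
        refine Finset.sum_le_sum fun j _ => ?_
        rw [norm_mul]
        gcongr
        · exact (hc i j x hx).trans (le_abs_self _)
        · exact norm_le_pi_norm w j
    _ = (∑ j, |c i j|) * ‖w‖ := by rw [Finset.sum_mul]
    _ ≤ _ := mul_le_mul_of_nonneg_right (hsum i) (norm_nonneg w)

lemma TendstoInMeasure.of_dist_le {α E F : Type*} [MeasurableSpace α] {μ : Measure α}
    [PseudoMetricSpace E] [PseudoMetricSpace F] {f : ℕ → α → E} {g : α → E}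
    {f' : ℕ → α → F} {g' : α → F} {C : ℝ} (hC : 0 ≤ C)
    (h : TendstoInMeasure μ f atTop g)
    (hle : ∀ᵐ x ∂μ, ∀ n, dist (f' n x) (g' x) ≤ C * dist (f n x) (g x)) :
    TendstoInMeasure μ f' atTop g' := by
  rw [tendstoInMeasure_iff_dist] at h ⊢
  intro ε hε
  -- `C + 1` rather than `C`, which may vanish.
  refine tendsto_of_tendsto_of_tendsto_of_le_of_le tendsto_const_nhds
    (h (ε / (C + 1)) (by positivity)) (fun _ => zero_le) fun n => ?_
  refine measure_mono_ae ?_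
  filter_upwards [hle] with x hx
  intro hxε
  change ε ≤ dist (f' n x) (g' x) at hxε
  change ε / (C + 1) ≤ dist (f n x) (g x)
  rw [div_le_iff₀ (by positivity)]
  nlinarith [hx n, dist_nonneg (x := f n x) (y := g x)]

lemma tendstoInMeasure_pi_iff {α : Type*} [MeasurableSpace α] {μ : Measure α} {N : ℕ}
    {f : ℕ → α → Fin N → ℝ} {g : α → Fin N → ℝ} :
    TendstoInMeasure μ f atTop g ↔
      ∀ i, TendstoInMeasure μ (fun n x => f n x i) atTop (fun x => g x i) := by
  constructor
  · intro h i
    exact TendstoInMeasure.of_dist_le zero_le_one h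
      (.of_forall fun x n => by rw [one_mul]; exact dist_le_pi_dist _ _ i)
  · intro h
    simp only [tendstoInMeasure_iff_dist] at h ⊢
    intro ε hε
    have hs : Tendsto (fun n => ∑ i, μ {x | ε ≤ dist (f n x i) (g x i)}) atTop (nhds 0) := by
      simpa using tendsto_finsetSum Finset.univ fun i _ => h i ε hε
    refine tendsto_of_tendsto_of_tendsto_of_le_of_le tendsto_const_nhds hs
      (fun _ => zero_le) fun n => ?_
    refine (measure_mono ?_).trans (measure_iUnion_fintype_le μ _)
    intro x hx
    by_contra hcon
    simp only [Set.mem_iUnion, Set.mem_setOf_eq, not_exists, not_le] at hcon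
    exact absurd ((dist_pi_lt_iff hε).2 hcon) (not_lt.2 hx)

/-- For continuous admissible coefficients on `Ω̄` and `u_I` the pointwise solution of
`u_i = 0 (i ∈ I)`, `f_j(u) = 0 (j ∉ I)`, a sequence of measurable functions `u_n`
satisfies `u_{in} → 0` in measure for `i ∈ I` and `f_{jn} → 0` in measure for `j ∉ I`
if and only if `u_n → u_I` in measure. -/
theorem tendstoInMeasure_components_iff_tendsto_uI {d N : ℕ} (hN : 0 < N)
    (κ : ℝ) (hκ : 0 < κ)
    (Ω : Set (Fin d → ℝ)) (hΩo : IsOpen Ω) (hΩb : Bornology.IsBounded Ω)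
    (a : Fin N → Fin N → (Fin d → ℝ) → ℝ) (m : Fin N → (Fin d → ℝ) → ℝ)
    (ha : ∀ i j, ContinuousOn (a i j) (closure Ω))
    (hm : ∀ i, ContinuousOn (m i) (closure Ω))
    (hadm : ∀ x ∈ closure Ω, IsAdmissible κ (Matrix.of fun i j => a i j x) fun i => m i x)
    (I : Finset (Fin N)) (uI : (Fin d → ℝ) → Fin N → ℝ)
    (huI : ∀ x ∈ closure Ω,
      (∀ i ∈ I, uI x i = 0) ∧ ∀ j ∉ I, m j x - ∑ k, a j k x * uI x k = 0)
    (u : ℕ → (Fin d → ℝ) → Fin N → ℝ) (humeas : ∀ n, Measurable (u n)) :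
    ((∀ i ∈ I, TendstoInMeasure (volume.restrict Ω)
        (fun n x => u n x i) atTop fun _ => 0) ∧
      (∀ j ∉ I, TendstoInMeasure (volume.restrict Ω)
        (fun n x => m j x - ∑ k, a j k x * u n x k) atTop fun _ => 0)) ↔
    TendstoInMeasure (volume.restrict Ω) u atTop uI := by
  set B : (Fin d → ℝ) → Matrix (Fin N) (Fin N) ℝ :=
    fun x => mixedMatrix (Matrix.of fun i j => a i j x) I with hB
  set v : ℕ → (Fin d → ℝ) → Fin N → ℝ := fun n x => (B x).mulVec (u n x - uI x) with hv
  have hK : IsCompact (closure Ω) := hΩb.isCompact_closure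
  have hBc : ContinuousOn B (closure Ω) := by
    refine continuousOn_pi.2 fun i => continuousOn_pi.2 fun j => ?_
    by_cases hi : i ∈ I
    · simpa [hB, mixedMatrix, hi] using continuousOn_const
    · simpa [hB, mixedMatrix, hi] using ha i j
  obtain ⟨C₁, hC₁, hb₁⟩ := exists_mulVec_bound hK hBc
  obtain ⟨C₂, hC₂, hb₂⟩ := exists_mulVec_bound hK
    ((continuous_id.matrix_adjugate).comp_continuousOn hBc)
  have hdet : ∀ x ∈ closure Ω, κ ≤ (B x).det := fun x hx => by
    rw [hB, det_mixedMatrix]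
    exact (hadm x hx).2.2.1 _
  have hae : ∀ᵐ x ∂(volume.restrict Ω), x ∈ closure Ω :=
    (ae_restrict_mem hΩo.measurableSet).mono fun x hx => subset_closure hx
  have hvI : ∀ x ∈ closure Ω, ∀ n, ∀ i ∈ I, v n x i = u n x i := fun x hx n i hi => by
    simp [hv, hB, mixedMatrix_mulVec, hi, (huI x hx).1 i hi]
  have hvJ : ∀ x ∈ closure Ω, ∀ n, ∀ j ∉ I,
      v n x j = -(m j x - ∑ k, a j k x * u n x k) := fun x hx n j hj => by
    have h := (huI x hx).2 j hj
    simp only [hv, hB, mixedMatrix_mulVec, hj, if_false, Matrix.of_apply, Pi.sub_apply, mul_sub,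
      Finset.sum_sub_distrib]
    linarith
  have hvw : TendstoInMeasure (volume.restrict Ω) v atTop (fun _ => 0) ↔
      TendstoInMeasure (volume.restrict Ω) u atTop uI := by
    constructor
    · intro h
      refine TendstoInMeasure.of_dist_le (C := C₂ / κ) (by positivity) h ?_
      filter_upwards [hae] with x hx n
      have h1 := hb₂ x hx (v n x)
      simp only [Function.comp, id, hv, Matrix.mulVec_mulVec, Matrix.adjugate_mul,
        Matrix.smul_mulVec, Matrix.one_mulVec, norm_smul, Real.norm_eq_abs] at h1
      rw [dist_eq_norm, dist_zero_right, div_mul_eq_mul_div, le_div_iff₀ hκ, mul_comm]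
      refine le_trans ?_ h1
      gcongr
      exact (hdet x hx).trans (le_abs_self _)
    · intro h
      refine TendstoInMeasure.of_dist_le hC₁ h ?_
      filter_upwards [hae] with x hx n
      rw [dist_eq_norm (u n x), dist_zero_right]
      exact hb₁ x hx _
  rw [← hvw, tendstoInMeasure_pi_iff]
  constructor
  · rintro ⟨h1, h2⟩ i
    by_cases hi : i ∈ I
    · refine TendstoInMeasure.of_dist_le zero_le_one (h1 i hi) ?_
      filter_upwards [hae] with x hx n
      simp [hvI x hx n i hi]
    · refine TendstoInMeasure.of_dist_le zero_le_one (h2 i hi) ?_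
      filter_upwards [hae] with x hx n
      rw [hvJ x hx n i hi, one_mul]
      simp only [Pi.zero_apply, dist_zero_right, norm_neg, le_refl]
  · intro h
    refine ⟨fun i hi => ?_, fun i hi => ?_⟩
    · refine TendstoInMeasure.of_dist_le zero_le_one (h i) ?_
      filter_upwards [hae] with x hx n
      simp [hvI x hx n i hi]
    · refine TendstoInMeasure.of_dist_le zero_le_one (h i) ?_
      filter_upwards [hae] with x hx n
      rw [hvJ x hx n i hi, one_mul]
      simp only [Pi.zero_apply, dist_zero_right, norm_neg, le_refl]
end
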